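/- Let n ≥ 1 and let C : [0,1]^n → {0,1} be a collaboration strategy. If acc_C(S) ≥ min_{i∈[n]} acc_i(S) for every collaboration setting S, then there exists k ∈ [n] such that for every (p_1, …, p_n) ∈ (0,1)^n with p_k ≠ 1/2, C(p_1, …, p_n) = round(p_k). -/

import Mathlib

open Finset

noncomputable def rnd (p : ℝ) : Bool := if (1/2 : ℝ) ≤ p then true else false

structure CollabSetting (n : ℕ) where
  X : Type
  [finX : Fintype X]
  D : X × Bool → ℝ
  D_nonneg : ∀ z, 0 ≤ D z
  D_sum_one : ∑ z : X × Bool, D z = 1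
  P : Fin n → X → ℝ
  P_mem : ∀ i x, 0 ≤ P i x ∧ P i x ≤ 1
  calibrated : ∀ (i : Fin n) (p : ℝ),
      0 < (∑ z : X × Bool, if P i z.1 = p then D z else 0) →
      (∑ z : X × Bool, if P i z.1 = p ∧ z.2 = true then D z else 0)
        = p * (∑ z : X × Bool, if P i z.1 = p then D z else 0)

attribute [instance] CollabSetting.finX

noncomputable def acc {n : ℕ} (S : CollabSetting n) (Yhat : S.X → Bool) : ℝ :=
  ∑ z : S.X × Bool, if Yhat z.1 = z.2 then S.D z else 0

noncomputable def accAgent {n : ℕ} (S : CollabSetting n) (i : Fin n) : ℝ :=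
  acc S (fun x => rnd (S.P i x))

noncomputable def accStrat {n : ℕ} (S : CollabSetting n) (C : (Fin n → ℝ) → Bool) : ℝ :=
  acc S (fun x => C (fun i => S.P i x))

/-!
Suppose that for every agent `k` there is a prediction profile `q k` in `(0, 1)` with `q k k ≠ 1/2`
at which `C` contradicts `k`. Put a point of weight `1` at this profile, with the label `l` favoured
by `k`, so that `C` errs there. To calibrate agent `j`, add a point labelled `!l` where `j` again
predicts `q k j` and all other agents predict the label exactly; its weight is the odds `j` gives
against `l`. Each agent then errs at exactly one point: at the profile, if it favours `!l`, or at
its own balancing point, which weighs at most `1`, and less than `1` for agent `k`. Hence `C` is at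
most as accurate as every agent and strictly less accurate than `k`. Mixing these settings over all
`k` makes `C` strictly less accurate than every agent.
-/

theorem sum_sigma_prod {ι β M : Type*} {α : ι → Type*} [Fintype ι] [∀ k, Fintype (α k)]
    [Fintype β] [AddCommMonoid M] (f : (Σ k, α k) × β → M) :
    ∑ z, f z = ∑ k, ∑ z : α k × β, f (⟨k, z.1⟩, z.2) := by
  simp only [Fintype.sum_prod_type, Fintype.sum_sigma]

namespace CollabSetting

variable {n : ℕ}

theorem calibration_eq (S : CollabSetting n) (i : Fin n) (p : ℝ) :
    (∑ z : S.X × Bool, if S.P i z.1 = p ∧ z.2 = true then S.D z else 0)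
      = p * ∑ z : S.X × Bool, if S.P i z.1 = p then S.D z else 0 := by
  have term_nonneg : ∀ z ∈ univ, 0 ≤ if S.P i z.1 = p then S.D z else 0 := fun z _ ↦ by
    split_ifs
    exacts [S.D_nonneg z, le_rfl]
  rcases (sum_nonneg term_nonneg).lt_or_eq with mass_pos | mass_zero
  · exact S.calibrated i p mass_pos
  · rw [← mass_zero, mul_zero]
    refine sum_eq_zero fun z hz ↦ ?_
    have term_zero := (sum_eq_zero_iff_of_nonneg term_nonneg).1 mass_zero.symm z hz
    split_ifs with h
    exacts [(if_pos h.1).symm.trans term_zero, rfl]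

section Mixture

variable {ι : Type} [Fintype ι]

/-- The mixture of the settings `S k` with mixing probabilities `a k`, on the disjoint union of
their feature spaces: a setting `S k` is drawn first, then a labelled point of it. -/
noncomputable def mix (a : stdSimplex ℝ ι) (S : ι → CollabSetting n) : CollabSetting n where
  X := Σ k, (S k).X
  D z := a z.1.1 * (S z.1.1).D (z.1.2, z.2)
  D_nonneg z := mul_nonneg (a.2.1 _) ((S z.1.1).D_nonneg _)
  D_sum_one := by
    simp only [sum_sigma_prod, Prod.mk.eta, ← mul_sum, D_sum_one, mul_one]
    exact a.2.2
  P i x := (S x.1).P i x.2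
  P_mem i x := (S x.1).P_mem i x.2
  calibrated i p _ := by
    simp only [sum_sigma_prod, Prod.mk.eta, ← mul_ite_zero, ← mul_sum, calibration_eq]
    rw [mul_sum]
    exact sum_congr rfl fun k _ ↦ mul_left_comm _ _ _

theorem acc_mix (a : stdSimplex ℝ ι) (S : ι → CollabSetting n) (f : (mix a S).X → Bool) :
    acc (mix a S) f = ∑ k, a k * acc (S k) fun x ↦ f ⟨k, x⟩ := by
  simp only [acc, mul_sum, mul_ite_zero]
  exact sum_sigma_prod _

theorem acc_mix_lt_acc_mix {a : stdSimplex ℝ ι} {S : ι → CollabSetting n}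
    {f g : (mix a S).X → Bool}
    (hle : ∀ k, acc (S k) (fun x ↦ f ⟨k, x⟩) ≤ acc (S k) fun x ↦ g ⟨k, x⟩)
    {k : ι} (hk : 0 < a k) (hlt : acc (S k) (fun x ↦ f ⟨k, x⟩) < acc (S k) fun x ↦ g ⟨k, x⟩) :
    acc (mix a S) f < acc (mix a S) g := by
  rw [acc_mix, acc_mix]
  exact sum_lt_sum (fun j _ ↦ mul_le_mul_of_nonneg_left (hle j) (a.2.1 j))
    ⟨k, mem_univ k, mul_lt_mul_of_pos_left hlt hk⟩

end Mixture

section DeterministicLabel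

variable {X : Type} [Fintype X] {w : X → ℝ} {label : X → Bool} {P : Fin n → X → ℝ}

/-- The setting in which a point `x` is drawn with probability proportional to `w x` and always has
the label `label x`. Calibration is the hypothesis `hcal`, free of normalization: the residuals
`label x - p` cancel on every level set of every predictor. -/
noncomputable def ofLabel (hw : ∀ x, 0 ≤ w x) (hpos : 0 < ∑ x, w x)
    (hP : ∀ i x, 0 ≤ P i x ∧ P i x ≤ 1)
    (hcal : ∀ i p, ∑ x, (if P i x = p then w x * ((label x).toNat - p) else 0) = 0) :
    CollabSetting n where
  X := X
  D z := if z.2 = label z.1 then w z.1 / ∑ x, w x else 0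
  D_nonneg z := by
    split_ifs
    exacts [div_nonneg (hw _) hpos.le, le_rfl]
  D_sum_one := by
    simp only [Fintype.sum_prod_type, sum_ite_eq', mem_univ, if_true, ← sum_div,
      div_self hpos.ne']
  P := P
  P_mem := hP
  calibrated i p _ := by
    rw [← sub_eq_zero, mul_sum, ← sum_sub_distrib, Fintype.sum_prod_type]
    calc _ = ∑ x, (if P i x = p then w x * ((label x).toNat - p) else 0) / ∑ x, w x := by
          refine sum_congr rfl fun x _ ↦ ?_
          by_cases hx : P i x = p <;> cases hl : label x <;> simp [hx, hl] <;> ring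
      _ = 0 := by rw [← sum_div, hcal, zero_div]

theorem acc_ofLabel (hw : ∀ x, 0 ≤ w x) (hpos : 0 < ∑ x, w x)
    (hP : ∀ i x, 0 ≤ P i x ∧ P i x ≤ 1)
    (hcal : ∀ i p, ∑ x, (if P i x = p then w x * ((label x).toNat - p) else 0) = 0)
    (f : X → Bool) :
    acc (ofLabel hw hpos hP hcal) f = 1 - (∑ x with f x ≠ label x, w x) / ∑ x, w x := by
  have acc_eq : acc (ofLabel hw hpos hP hcal) f = (∑ x with f x = label x, w x) / ∑ x, w x := by
    rw [sum_filter, sum_div]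
    refine (Fintype.sum_prod_type _).trans (sum_congr rfl fun x _ ↦ ?_)
    cases hf : f x <;> cases hl : label x <;> simp [ofLabel, hf, hl]
  rw [acc_eq, eq_sub_iff_add_eq, ← add_div, sum_filter_add_sum_filter_not, div_self hpos.ne']

end DeterministicLabel

end CollabSetting

theorem rnd_toNat (b : Bool) : rnd b.toNat = b := by
  cases b <;> norm_num [rnd]

/-- The probability that the prediction `p` assigns to the label `l`. -/
def labelProb (l : Bool) (p : ℝ) : ℝ := bif l then p else 1 - p

/-- The odds that the prediction `p` gives against the label `l`. A point labelled `!l` with this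
weight balances a point of weight `1` labelled `l` at the same prediction. -/
noncomputable def oddsAgainst (l : Bool) (p : ℝ) : ℝ := labelProb (!l) p / labelProb l p

section Odds

variable {l : Bool} {p : ℝ}

theorem labelProb_not (l : Bool) (p : ℝ) : labelProb (!l) p = 1 - labelProb l p := by
  cases l <;> simp [labelProb]

theorem labelProb_pos (l : Bool) (hp : p ∈ Set.Ioo (0 : ℝ) 1) : 0 < labelProb l p := by
  cases l
  exacts [sub_pos.2 hp.2, hp.1]

theorem half_le_labelProb_rnd (p : ℝ) : 1 / 2 ≤ labelProb (rnd p) p := by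
  unfold rnd
  split_ifs with h
  · exact h
  · change 1 / 2 ≤ 1 - p
    linarith

theorem half_lt_labelProb_rnd (hp : p ≠ 1 / 2) : 1 / 2 < labelProb (rnd p) p := by
  refine (half_le_labelProb_rnd p).lt_of_ne fun h ↦ hp ?_
  cases hr : rnd p <;> simp only [hr, labelProb, cond_true, cond_false] at h <;> linarith

theorem oddsAgainst_nonneg (l : Bool) (hp : p ∈ Set.Ioo (0 : ℝ) 1) : 0 ≤ oddsAgainst l p :=
  div_nonneg (labelProb_pos _ hp).le (labelProb_pos _ hp).le

theorem oddsAgainst_rnd_le_one (p : ℝ) : oddsAgainst (rnd p) p ≤ 1 := by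
  have h := half_le_labelProb_rnd p
  rw [oddsAgainst, labelProb_not, div_le_one (by linarith)]
  linarith

theorem oddsAgainst_rnd_lt_one (hp : p ≠ 1 / 2) : oddsAgainst (rnd p) p < 1 := by
  have h := half_lt_labelProb_rnd hp
  rw [oddsAgainst, labelProb_not, div_lt_one (by linarith)]
  linarith

theorem residual_add_oddsAgainst_mul_residual (l : Bool) (hp : p ∈ Set.Ioo (0 : ℝ) 1) :
    (l.toNat - p) + oddsAgainst l p * ((!l).toNat - p) = 0 := by
  cases l
  · have one_sub_ne_zero : 1 - p ≠ 0 := (sub_pos.2 hp.2).ne'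
    simp [oddsAgainst, labelProb, one_sub_ne_zero]
  · simp [oddsAgainst, labelProb, hp.1.ne']

end Odds

section Witness

variable {ι : Type*}

/-- The labels of the witness setting for the profile `q` and the label `l`: the profile is observed
at `none`, and `some j` is the point balancing agent `j`. -/
def witnessLabel (l : Bool) : Option ι → Bool
  | none => l
  | some _ => !l

/-- The unnormalized weights of the witness setting. -/
noncomputable def witnessWeight (l : Bool) (q : ι → ℝ) : Option ι → ℝ
  | none => 1
  | some j => oddsAgainst l (q j)

/-- The predictions of the witness setting: `i` predicts `q i` at `none` and at its own balancing
point, and the true label at the balancing points of the other agents. -/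
def witnessPrediction [DecidableEq ι] (l : Bool) (q : ι → ℝ) (i : ι) : Option ι → ℝ
  | none => q i
  | some j => if j = i then q i else (!l).toNat

variable {l : Bool} {q : ι → ℝ}

theorem witnessWeight_nonneg (l : Bool) (hq : ∀ i, q i ∈ Set.Ioo (0 : ℝ) 1) :
    ∀ x, 0 ≤ witnessWeight l q x
  | none => zero_le_one
  | some j => oddsAgainst_nonneg l (hq j)

theorem sum_witnessWeight_pos [Fintype ι] (l : Bool) (hq : ∀ i, q i ∈ Set.Ioo (0 : ℝ) 1) :
    0 < ∑ x, witnessWeight l q x :=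
  sum_pos' (fun x _ ↦ witnessWeight_nonneg l hq x) ⟨none, mem_univ _, zero_lt_one⟩

variable [DecidableEq ι]

theorem witnessPrediction_mem (l : Bool) {i : ι} (hi : q i ∈ Set.Icc (0 : ℝ) 1) :
    ∀ x, 0 ≤ witnessPrediction l q i x ∧ witnessPrediction l q i x ≤ 1
  | none => hi
  | some j => by
    rw [witnessPrediction]
    split_ifs
    · exact hi
    · cases l <;> simp

theorem witness_calibrated [Fintype ι] (l : Bool) {i : ι} (hi : q i ∈ Set.Ioo (0 : ℝ) 1) (p : ℝ) :
    ∑ x, (if witnessPrediction l q i x = p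
      then witnessWeight l q x * ((witnessLabel l x).toNat - p) else 0) = 0 := by
  rw [Fintype.sum_option, sum_eq_single i]
  · simp only [witnessPrediction, witnessWeight, witnessLabel, if_true, one_mul]
    split_ifs with hp
    · exact hp ▸ residual_add_oddsAgainst_mul_residual l hi
    · exact add_zero 0
  · intro j _ hj
    simp only [witnessPrediction, witnessLabel, if_neg hj]
    refine ite_eq_right_iff.2 fun hp ↦ ?_
    rw [hp, sub_self, mul_zero]
  · exact fun not_mem ↦ absurd (mem_univ i) not_mem

theorem witness_errors_eq_singleton [Fintype ι] (l : Bool) (q : ι → ℝ) (i : ι) :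
    ({x | rnd (witnessPrediction l q i x) ≠ witnessLabel l x} : Finset (Option ι))
      = {if rnd (q i) = l then some i else none} := by
  ext x
  rw [mem_filter_univ, mem_singleton]
  rcases x with _ | j
  · by_cases hi : rnd (q i) = l <;> simp [witnessPrediction, witnessLabel, hi]
  · by_cases hi : rnd (q i) = l <;> by_cases hj : j = i <;>
      simp [witnessPrediction, witnessLabel, hi, hj, rnd_toNat]

end Witness

section WitnessSetting

variable {n : ℕ} {l : Bool} {q : Fin n → ℝ}

/-- The setting with the points `Option (Fin n)` in which every agent errs at exactly one point,
and any strategy that does not map the profile `q` to `l` errs at `none`. -/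
noncomputable def witnessSetting (l : Bool) (hq : ∀ i, q i ∈ Set.Ioo (0 : ℝ) 1) :
    CollabSetting n :=
  .ofLabel (witnessWeight_nonneg l hq) (sum_witnessWeight_pos l hq)
    (fun i ↦ witnessPrediction_mem l (Set.Ioo_subset_Icc_self (hq i)))
    (fun i ↦ witness_calibrated l (hq i))

theorem acc_witnessSetting (hq : ∀ i, q i ∈ Set.Ioo (0 : ℝ) 1) (f : Option (Fin n) → Bool) :
    acc (witnessSetting l hq) f
      = 1 - (∑ x with f x ≠ witnessLabel l x, witnessWeight l q x) / ∑ x, witnessWeight l q x :=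
  CollabSetting.acc_ofLabel ..

theorem accAgent_witnessSetting (hq : ∀ i, q i ∈ Set.Ioo (0 : ℝ) 1) (i : Fin n) :
    accAgent (witnessSetting l hq) i
      = 1 - (if rnd (q i) = l then oddsAgainst l (q i) else 1) / ∑ x, witnessWeight l q x := by
  have error_weight : ∑ x with rnd (witnessPrediction l q i x) ≠ witnessLabel l x,
      witnessWeight l q x = if rnd (q i) = l then oddsAgainst l (q i) else 1 := by
    rw [witness_errors_eq_singleton, sum_singleton, apply_ite (witnessWeight l q), witnessWeight,
      witnessWeight]
  rw [← error_weight]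
  exact acc_witnessSetting hq _

theorem accStrat_witnessSetting_le {C : (Fin n → ℝ) → Bool} (hq : ∀ i, q i ∈ Set.Ioo (0 : ℝ) 1)
    (hC : C q ≠ l) :
    accStrat (witnessSetting l hq) C ≤ 1 - 1 / ∑ x, witnessWeight l q x := by
  have one_le_error_weight : 1 ≤ ∑ x with (C fun i ↦ witnessPrediction l q i x) ≠ witnessLabel l x,
      witnessWeight l q x :=
    single_le_sum (f := witnessWeight l q) (fun x _ ↦ witnessWeight_nonneg l hq x)
      (mem_filter.2 ⟨mem_univ none, hC⟩)
  refine (acc_witnessSetting hq _).trans_le (sub_le_sub_left ?_ 1)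
  exact div_le_div_of_nonneg_right one_le_error_weight (sum_witnessWeight_pos l hq).le

theorem le_accAgent_witnessSetting (l : Bool) (hq : ∀ i, q i ∈ Set.Ioo (0 : ℝ) 1) (i : Fin n) :
    1 - 1 / ∑ x, witnessWeight l q x ≤ accAgent (witnessSetting l hq) i := by
  rw [accAgent_witnessSetting]
  refine sub_le_sub_left (div_le_div_of_nonneg_right ?_ (sum_witnessWeight_pos l hq).le) 1
  split_ifs with hi
  · exact hi ▸ oddsAgainst_rnd_le_one (q i)
  · exact le_rfl

theorem lt_accAgent_witnessSetting (hq : ∀ i, q i ∈ Set.Ioo (0 : ℝ) 1) {k : Fin n}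
    (hk : q k ≠ 1 / 2) :
    1 - 1 / ∑ x, witnessWeight (rnd (q k)) q x < accAgent (witnessSetting (rnd (q k)) hq) k := by
  rw [accAgent_witnessSetting, if_pos rfl]
  exact sub_lt_sub_left
    (div_lt_div_of_pos_right (oddsAgainst_rnd_lt_one hk) (sum_witnessWeight_pos _ hq)) 1

theorem exists_setting_accStrat_le_and_lt {C : (Fin n → ℝ) → Bool} {k : Fin n}
    (hq : ∀ i, q i ∈ Set.Ioo (0 : ℝ) 1) (hk : q k ≠ 1 / 2) (hC : C q ≠ rnd (q k)) :
    ∃ S : CollabSetting n, (∀ i, accStrat S C ≤ accAgent S i) ∧ accStrat S C < accAgent S k :=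
  ⟨witnessSetting (rnd (q k)) hq,
    fun i ↦ (accStrat_witnessSetting_le hq hC).trans (le_accAgent_witnessSetting _ hq i),
    (accStrat_witnessSetting_le hq hC).trans_lt (lt_accAgent_witnessSetting hq hk)⟩

end WitnessSetting

/-- A reliable strategy must defer to some fixed agent away from 1/2. -/
theorem stmt_3 (n : ℕ) (hn : 1 ≤ n) (C : (Fin n → ℝ) → Bool)
    (hreliable : ∀ S : CollabSetting n, (⨅ i : Fin n, accAgent S i) ≤ accStrat S C) :
    ∃ k : Fin n, ∀ p : Fin n → ℝ,
      (∀ i, p i ∈ Set.Ioo (0 : ℝ) 1) → p k ≠ 1/2 → C p = rnd (p k) := by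
  by_contra! no_dictator
  choose q hq hne hC using no_dictator
  choose S strat_le strat_lt using fun k ↦ exists_setting_accStrat_le_and_lt (hq k) (hne k) (hC k)
  have : Nonempty (Fin n) := ⟨⟨0, hn⟩⟩
  let mixed : CollabSetting n := .mix stdSimplex.barycenter S
  obtain ⟨i, hi⟩ := exists_eq_ciInf_of_finite (f := accAgent mixed)
  have barycenter_pos : 0 < (stdSimplex.barycenter : stdSimplex ℝ (Fin n)) i :=
    inv_pos.2 (Nat.cast_pos.2 Fintype.card_pos)
  have strat_lt_agent : accStrat mixed C < accAgent mixed i :=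
    CollabSetting.acc_mix_lt_acc_mix (fun k ↦ strat_le k i) barycenter_pos (strat_lt i)
  exact (hreliable mixed).not_gt (hi ▸ strat_lt_agent)
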